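/- For any basepoint x of the Heisenberg manifold H(ℝ)/H(ℤ), the fundamental group π₁(H(ℝ)/H(ℤ), x) is isomorphic, as a group, to the discrete Heisenberg group H(ℤ). -/

import Mathlib

/-- The Heisenberg group over a commutative ring `R`: upper unitriangular `3 × 3` matrices,
identified with triples `(x, y, z)` with multiplication
`(a,b,c)·(a',b',c') = (a+a', b+b', c+c'+a·b')`. -/
@[ext]
structure Heis (R : Type*) where
  /-- the `(1,2)` entry -/
  x : R
  /-- the `(2,3)` entry -/
  y : R
  /-- the `(1,3)` entry -/
  z : R

namespace Heis

variable {R : Type*} [CommRing R]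

instance : Mul (Heis R) :=
  ⟨fun p q => ⟨p.x + q.x, p.y + q.y, p.z + q.z + p.x * q.y⟩⟩

instance : One (Heis R) := ⟨⟨0, 0, 0⟩⟩

instance : Inv (Heis R) := ⟨fun p => ⟨-p.x, -p.y, -p.z + p.x * p.y⟩⟩

@[simp] theorem mul_x (p q : Heis R) : (p * q).x = p.x + q.x := rfl
@[simp] theorem mul_y (p q : Heis R) : (p * q).y = p.y + q.y := rfl
@[simp] theorem mul_z (p q : Heis R) : (p * q).z = p.z + q.z + p.x * q.y := rfl
@[simp] theorem one_x : (1 : Heis R).x = 0 := rfl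
@[simp] theorem one_y : (1 : Heis R).y = 0 := rfl
@[simp] theorem one_z : (1 : Heis R).z = 0 := rfl
@[simp] theorem inv_x (p : Heis R) : p⁻¹.x = -p.x := rfl
@[simp] theorem inv_y (p : Heis R) : p⁻¹.y = -p.y := rfl
@[simp] theorem inv_z (p : Heis R) : p⁻¹.z = -p.z + p.x * p.y := rfl

instance : Group (Heis R) where
  mul_assoc p q r := by ext <;> simp <;> ring
  one_mul p := by ext <;> simp
  mul_one p := by ext <;> simp
  inv_mul_cancel p := by ext <;> simp

end Heis

/-- `H(ℝ)` is topologized as `ℝ³`. -/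
instance : TopologicalSpace (Heis ℝ) :=
  TopologicalSpace.induced (fun p => (p.x, p.y, p.z)) inferInstance

/-- The inclusion `H(ℤ) → H(ℝ)`. -/
def Heis.castHom : Heis ℤ →* Heis ℝ where
  toFun p := ⟨(p.x : ℝ), (p.y : ℝ), (p.z : ℝ)⟩
  map_one' := by ext <;> simp
  map_mul' p q := by ext <;> simp

/-- The discrete Heisenberg group `H(ℤ)` as a subgroup of `H(ℝ)`. -/
def Heis.HZ : Subgroup (Heis ℝ) := Heis.castHom.range

/-- The Heisenberg manifold: the coset space of `H(ℝ)` by `H(ℤ)`, with the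
quotient topology. -/
abbrev HeisMan : Type := Heis ℝ ⧸ Heis.HZ

/-!
`H(ℝ)` is a simply connected topological group, being homeomorphic to `ℝ³`, and `H(ℤ)`, its set of
integer points, is discrete. Hence `H(ℝ) → H(ℝ)/H(ℤ)` is a universal covering, and the fundamental
group of the base is its deck group `H(ℤ)`.
-/

section SubgroupQuotient

variable {G : Type*} [Group G]

/-- The opposite of the group `S.op`, through which a subgroup `S` acts by right translations, is
`S` itself. -/
def subgroupOpMulOppositeEquiv (S : Subgroup G) : S.opᵐᵒᵖ ≃* S where
  toEquiv := MulOpposite.opEquiv.symm.trans S.equivOp.symm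
  map_mul' _ _ := rfl

/-- The fundamental group of the coset space `G ⧸ S` of a simply connected topological group by a
discrete subgroup is `S`; the isomorphism depends on the point `g` chosen over the basepoint. -/
noncomputable def fundamentalGroupQuotientEquiv [TopologicalSpace G] [IsTopologicalGroup G]
    [SimplyConnectedSpace G] (S : Subgroup G) (hS : IsDiscrete (S : Set G)) (g : G) :
    FundamentalGroup (G ⧸ S) g ≃* S :=
  ((S.isQuotientCoveringMap hS).fundamentalGroupEquiv ⟨g, rfl⟩).trans
    (subgroupOpMulOppositeEquiv S)

end SubgroupQuotient

namespace Heis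

/-- The matrix entries as global coordinates, identifying the space `H(ℝ)` with `ℝ³`. -/
def homeomorphProd : Heis ℝ ≃ₜ ℝ × ℝ × ℝ where
  toFun p := (p.x, p.y, p.z)
  invFun q := ⟨q.1, q.2.1, q.2.2⟩
  left_inv _ := rfl
  right_inv _ := rfl
  continuous_toFun := continuous_induced_dom
  continuous_invFun := continuous_induced_rng.2 continuous_id

@[fun_prop]
theorem continuous_x : Continuous (x : Heis ℝ → ℝ) :=
  continuous_fst.comp homeomorphProd.continuous

@[fun_prop]
theorem continuous_y : Continuous (y : Heis ℝ → ℝ) :=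
  (continuous_fst.comp continuous_snd).comp homeomorphProd.continuous

@[fun_prop]
theorem continuous_z : Continuous (z : Heis ℝ → ℝ) :=
  (continuous_snd.comp continuous_snd).comp homeomorphProd.continuous

instance : IsTopologicalGroup (Heis ℝ) where
  continuous_mul := by
    rw [← homeomorphProd.comp_continuous_iff]
    change Continuous fun p : Heis ℝ × Heis ℝ =>
      (p.1.x + p.2.x, p.1.y + p.2.y, p.1.z + p.2.z + p.1.x * p.2.y)
    fun_prop
  continuous_inv := by
    rw [← homeomorphProd.comp_continuous_iff]
    change Continuous fun p : Heis ℝ => (-p.x, -p.y, -p.z + p.x * p.y)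
    fun_prop

instance : ContractibleSpace (Heis ℝ) := homeomorphProd.contractibleSpace

theorem castHom_injective : Function.Injective castHom := fun _ _ h =>
  Heis.ext (Int.cast_injective (congrArg x h)) (Int.cast_injective (congrArg y h))
    (Int.cast_injective (congrArg z h))

theorem coe_HZ_eq_preimage_homeomorphProd :
    (HZ : Set (Heis ℝ)) = homeomorphProd ⁻¹'
      Set.range (Prod.map Int.cast (Prod.map Int.cast Int.cast) : ℤ × ℤ × ℤ → ℝ × ℝ × ℝ) := by
  ext p
  constructor
  · rintro ⟨q, rfl⟩
    exact ⟨(q.x, q.y, q.z), rfl⟩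
  · rintro ⟨⟨a, b, c⟩, h⟩
    exact ⟨⟨a, b, c⟩, homeomorphProd.injective h⟩

theorem isDiscrete_HZ : IsDiscrete (HZ : Set (Heis ℝ)) := by
  have hcast : Topology.IsInducing (Int.cast : ℤ → ℝ) := Int.isClosedEmbedding_coe_real.isInducing
  rw [coe_HZ_eq_preimage_homeomorphProd]
  exact (hcast.prodMap (hcast.prodMap hcast)).isDiscrete_range.preimage
    homeomorphProd.continuous.continuousOn homeomorphProd.injective

end Heis

/-- For any basepoint, the fundamental group of the Heisenberg manifold `H(ℝ)/H(ℤ)` is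
isomorphic to the discrete Heisenberg group `H(ℤ)`. -/
theorem heisMan_fundamentalGroup :
    ∀ x : HeisMan, Nonempty (FundamentalGroup HeisMan x ≃* Heis ℤ) := by
  intro x
  obtain ⟨g, rfl⟩ := QuotientGroup.mk_surjective x
  exact ⟨(fundamentalGroupQuotientEquiv Heis.HZ Heis.isDiscrete_HZ g).trans
    (MonoidHom.ofInjective Heis.castHom_injective).symm⟩
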